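/- Let 𝔪, a, r, θ be arbitrary real numbers and set Δ := r² − 2𝔪r + a², ϱ² := r² + a²cos²θ. Let B be the 4×4 real symmetric matrix B = (Δ/ϱ²)·u uᵀ − u e₁ᵀ − e₁ uᵀ − ϱ²·e₂ e₂ᵀ − (sin²θ/ϱ²)·w wᵀ, where u = (1, 0, 0, −a sin²θ)ᵀ, w = (a, 0, 0, −(r²+a²))ᵀ, e₁ = (0,1,0,0)ᵀ, e₂ = (0,0,1,0)ᵀ (for ϱ² = 0 define the entries by the same rational expressions; all entries of B are in fact polynomial in r and smooth in θ away from ϱ² = 0). Then det B = −ϱ⁴ sin²θ = −(r² + a²cos²θ)² sin²θ. In particular, B is invertible whenever ϱ² ≠ 0 and sin θ ≠ 0, regardless of the sign or vanishing of Δ. -/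

import Mathlib

open Matrix Real

/-- The coordinate matrix of the Kerr metric in the regular coordinates
`(t_*, r, θ, φ_*)`, smooth across the event horizon. -/
noncomputable def kerrStar (𝔪 a r θ : ℝ) : Matrix (Fin 4) (Fin 4) ℝ :=
  let Δ : ℝ := r ^ 2 - 2 * 𝔪 * r + a ^ 2
  let ϱ2 : ℝ := r ^ 2 + a ^ 2 * Real.cos θ ^ 2
  let u : Fin 4 → ℝ := ![1, 0, 0, -(a * Real.sin θ ^ 2)]
  let w : Fin 4 → ℝ := ![a, 0, 0, -(r ^ 2 + a ^ 2)]
  let e1 : Fin 4 → ℝ := ![0, 1, 0, 0]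
  let e2 : Fin 4 → ℝ := ![0, 0, 1, 0]
  (Δ / ϱ2) • vecMulVec u u - vecMulVec u e1 - vecMulVec e1 u
    - ϱ2 • vecMulVec e2 e2 - (Real.sin θ ^ 2 / ϱ2) • vecMulVec w w

/-- In the coframe `u, e₁, e₂, w` the quadratic form is block diagonal, so its determinant only
sees `s`, `q` and the area spanned by `u` and `w`. -/
theorem det_quadraticForm_horizonRegular (p q s u₀ u₃ w₀ w₃ : ℝ) :
    (p • vecMulVec ![u₀, 0, 0, u₃] ![u₀, 0, 0, u₃]
        - vecMulVec ![u₀, 0, 0, u₃] ![0, 1, 0, 0] - vecMulVec ![0, 1, 0, 0] ![u₀, 0, 0, u₃]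
        - s • vecMulVec ![0, 0, 1, 0] ![0, 0, 1, 0]
        - q • vecMulVec ![w₀, 0, 0, w₃] ![w₀, 0, 0, w₃] : Matrix (Fin 4) (Fin 4) ℝ).det
      = -(s * q * (u₀ * w₃ - u₃ * w₀) ^ 2) := by
  simp [Matrix.det_succ_row_zero, Fin.sum_univ_succ, Fin.succAbove]
  ring

/-- The determinant of the Kerr metric in the regular coordinates
`(t_*, r, θ, φ_*)` is `−ϱ⁴ sin²θ`; in particular the metric is nondegenerate
wherever `ϱ² ≠ 0` and `sin θ ≠ 0`, regardless of the sign or vanishing of `Δ`. -/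
theorem kerrStar_det (𝔪 a r θ : ℝ) :
    (kerrStar 𝔪 a r θ).det
        = -((r ^ 2 + a ^ 2 * Real.cos θ ^ 2) ^ 2 * Real.sin θ ^ 2) ∧
      (r ^ 2 + a ^ 2 * Real.cos θ ^ 2 ≠ 0 → Real.sin θ ≠ 0 →
        IsUnit (kerrStar 𝔪 a r θ)) := by
  have hdet : (kerrStar 𝔪 a r θ).det
      = -((r ^ 2 + a ^ 2 * Real.cos θ ^ 2) ^ 2 * Real.sin θ ^ 2) := by
    have harea : 1 * -(r ^ 2 + a ^ 2) - -(a * Real.sin θ ^ 2) * a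
        = -(r ^ 2 + a ^ 2 * Real.cos θ ^ 2) := by
      rw [Real.sin_sq]
      ring
    unfold kerrStar
    rw [det_quadraticForm_horizonRegular, harea]
    by_cases h : r ^ 2 + a ^ 2 * Real.cos θ ^ 2 = 0
    · simp [h]
    · field_simp
  refine ⟨hdet, fun hρ hsin => ?_⟩
  rw [Matrix.isUnit_iff_isUnit_det, hdet, isUnit_iff_ne_zero]
  exact neg_ne_zero.mpr (mul_ne_zero (pow_ne_zero 2 hρ) (pow_ne_zero 2 hsin))
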